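/- Let k be a commutative ring, let m₁, m₂, n₁, n₂ ∈ k[x₁,x₂,x₃] be homogeneous linear forms, set a₃ := u₁·m₂(u₁²,u₁u₂,u₂²) − u₂·m₁(u₁²,u₁u₂,u₂²) and b₅ := u₁³·n₂(u₁²,u₁u₂,u₂²) − u₂³·n₁(u₁²,u₁u₂,u₂²) in k[u₁,u₂], and let N be the 2×3 matrix with rows (x₁, x₂, x₃n₁ + x₄m₁) and (x₂, x₃, x₁n₂ + x₄m₂) over k[x₁,x₂,x₃,x₄]. Then under the substitution x₁ = u₁²·a₃, x₂ = u₁u₂·a₃, x₃ = u₂²·a₃, x₄ = −b₅, all three 2×2 minors of N become identically zero in k[u₁,u₂]. -/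

import Mathlib

open MvPolynomial

noncomputable section

/-- Evaluation of a polynomial in `x₁,x₂,x₃` at `(u₁², u₁u₂, u₂²)`,
landing in `k[u₁,u₂]`. -/
def sub3 (k : Type*) [CommRing k] :
    MvPolynomial (Fin 3) k →ₐ[k] MvPolynomial (Fin 2) k :=
  aeval ![X 0 ^ 2, X 0 * X 1, X 1 ^ 2]

/-- The inclusion `k[x₁,x₂,x₃] → k[x₁,x₂,x₃,x₄]`. -/
def rho (k : Type*) [CommRing k] :
    MvPolynomial (Fin 3) k →ₐ[k] MvPolynomial (Fin 4) k :=
  aeval ![X 0, X 1, X 2]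

theorem aeval_scale {k : Type*} [CommRing k] {σ : Type*} {A : Type*} [CommRing A] [Algebra k A]
    (p : MvPolynomial σ k) (hp : p.IsHomogeneous 1) (a : A) (f g : σ → A)
    (hg : ∀ i, g i = a * f i) :
    aeval g p = a * aeval f p := by
  rw [aeval_def, aeval_def, eval₂_eq, eval₂_eq, Finset.mul_sum]
  refine Finset.sum_congr rfl fun d hd => ?_
  have h1 : d.degree = 1 := by
    have := hp (mem_support_iff.mp hd)
    rwa [Finsupp.degree_eq_weight_one]
  have h2 : ∏ i ∈ d.support, a ^ d i = a := by
    rw [Finset.prod_pow_eq_pow_sum]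
    change a ^ d.degree = a
    rw [h1, pow_one]
  simp only [hg, mul_pow, Finset.prod_mul_distrib, h2]
  ring

theorem aeval_rho {k : Type*} [CommRing k] (p : MvPolynomial (Fin 3) k)
    (hp : p.IsHomogeneous 1) (a b : MvPolynomial (Fin 2) k) :
    aeval ![X 0 ^ 2 * a, X 0 * X 1 * a, X 1 ^ 2 * a, b] (rho k p) = a * sub3 k p := by
  unfold rho sub3
  rw [← AlgHom.comp_apply, comp_aeval]
  apply aeval_scale p hp
  intro i
  fin_cases i <;> simp [mul_comm]

/-- Under the substitution `x₁ = u₁²a₃, x₂ = u₁u₂a₃, x₃ = u₂²a₃, x₄ = −b₅`,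
all three `2×2` minors of the matrix `N` with rows `(x₁, x₂, x₃n₁ + x₄m₁)` and
`(x₂, x₃, x₁n₂ + x₄m₂)` become identically zero in `k[u₁,u₂]`. -/
theorem stmt3 {k : Type*} [CommRing k] (m₁ m₂ n₁ n₂ : MvPolynomial (Fin 3) k)
    (hm₁ : m₁.IsHomogeneous 1) (hm₂ : m₂.IsHomogeneous 1)
    (hn₁ : n₁.IsHomogeneous 1) (hn₂ : n₂.IsHomogeneous 1)
    (a₃ b₅ : MvPolynomial (Fin 2) k)
    (ha : a₃ = X 0 * sub3 k m₂ - X 1 * sub3 k m₁)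
    (hb : b₅ = X 0 ^ 3 * sub3 k n₂ - X 1 ^ 3 * sub3 k n₁) :
    aeval ![X 0 ^ 2 * a₃, X 0 * X 1 * a₃, X 1 ^ 2 * a₃, -b₅]
      (X 0 * X 2 - X 1 ^ 2 : MvPolynomial (Fin 4) k) = 0 ∧
    aeval ![X 0 ^ 2 * a₃, X 0 * X 1 * a₃, X 1 ^ 2 * a₃, -b₅]
      (X 0 * (X 0 * rho k n₂ + X 3 * rho k m₂)
        - X 1 * (X 2 * rho k n₁ + X 3 * rho k m₁) : MvPolynomial (Fin 4) k) = 0 ∧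
    aeval ![X 0 ^ 2 * a₃, X 0 * X 1 * a₃, X 1 ^ 2 * a₃, -b₅]
      (X 1 * (X 0 * rho k n₂ + X 3 * rho k m₂)
        - X 2 * (X 2 * rho k n₁ + X 3 * rho k m₁) : MvPolynomial (Fin 4) k) = 0 := by
  refine ⟨?_, ?_, ?_⟩ <;>
    simp only [map_sub, map_mul, map_add, map_pow, aeval_rho _ hm₁, aeval_rho _ hm₂,
      aeval_rho _ hn₁, aeval_rho _ hn₂, aeval_X] <;>
    simp <;> (try rw [hb, ha]) <;> ring

end
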